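/- Let μ and ν be two non-negative Poisson measures on ℝ^d, and let B(x_n, R_n) ⊂ ℝ^d be a sequence of balls with R_n → ∞ as n → ∞. If either |μ−ν|(B(x_n,R_n)) = o(R_n^d) as n → ∞, or |μ̂−ν̂|(B(x_n,R_n)) = o(R_n^d) as n → ∞, then μ = ν. -/

import Mathlib

open MeasureTheory Metric Filter Topology Complex SchwartzMap Bornology
open scoped RealInnerProductSpace ENNReal

noncomputable section

/-- A continuous function `g` is *Bohr almost periodic* if for every `ε > 0` its set of
`ε`-almost periods is relatively dense. -/
def IsBohrAP {V : Type*} [SeminormedAddCommGroup V] (g : V → ℂ) : Prop :=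
  Continuous g ∧ ∀ ε : ℝ, 0 < ε → ∃ L : ℝ, 0 < L ∧ ∀ x : V, ∃ τ : V,
    dist τ x < L ∧ ∀ y : V, ‖g (y + τ) - g y‖ < ε

/-- A pure point complex measure on `V`, described by its (countably supported) mass function. -/
structure PPM (V : Type*) where
  mass : V → ℂ
  countable : (Function.support mass).Countable

namespace PPM

variable {V : Type*}

/-- The total variation of a pure point measure, evaluated on a set. -/
def var (μ : PPM V) (A : Set V) : ℝ≥0∞ := ∑' x : A, (‖μ.mass x‖₊ : ℝ≥0∞)

/-- Pairing of a pure point measure with a test function: `∫ φ dμ = Σ_x μ{x}·φ(x)`. -/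
def pair (μ : PPM V) (φ : V → ℂ) : ℂ := ∑' x, μ.mass x * φ x

/-- Convolution `(μ ⋆ ψ)(t) = ∫ ψ(t - x) dμ(x)`. -/
def conv [SubtractionMonoid V] (μ : PPM V) (ψ : V → ℂ) (t : V) : ℂ :=
  ∑' x, μ.mass x * ψ (t - x)

/-- A pure point measure is non-negative if each mass is a non-negative real number. -/
def Nonneg (μ : PPM V) : Prop := ∀ x, μ.mass x = (‖μ.mass x‖ : ℂ)

end PPM

/-- Euclidean space `ℝ^d`. -/
abbrev Ed (d : ℕ) := EuclideanSpace ℝ (Fin d)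

variable {d : ℕ}

/-- Local finiteness: the total variation of every ball is finite. -/
def PPM.locFinite (μ : PPM (Ed d)) : Prop := ∀ r : ℝ, μ.var (ball 0 r) < ⊤

/-- The measure is a temperate distribution: it pairs (absolutely) with every Schwartz
function. -/
def PPM.temperate (μ : PPM (Ed d)) : Prop :=
  ∀ φ : SchwartzMap (Ed d) ℂ, Summable fun x => μ.mass x * φ x

/-- `ν` is the distributional Fourier transform of `μ`: `μ(φ̂) = ν(φ)` on test functions. -/
def IsFT (μ ν : PPM (Ed d)) : Prop :=
  ∀ φ : SchwartzMap (Ed d) ℂ, HasCompactSupport φ →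
    μ.pair ⇑(FourierTransform.fourierCLE ℂ (SchwartzMap (Ed d) ℂ) φ) = ν.pair ⇑φ

/-- A Poisson measure: a pure point measure which is a temperate distribution and whose
distributional Fourier transform is a pure point measure. -/
def IsPoisson (μ : PPM (Ed d)) : Prop :=
  μ.locFinite ∧ μ.temperate ∧ ∃ ν : PPM (Ed d), ν.locFinite ∧ IsFT μ ν


/-- Total variation of the difference of two pure point measures, on a set. -/
def dvar {V : Type*} (μ ν : PPM V) (A : Set V) : ℝ≥0∞ :=
  ∑' x : A, (‖μ.mass x - ν.mass x‖₊ : ℝ≥0∞)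

/-!
A wave packet `y ↦ e^{2πi⟨c,y⟩} f(r(y - b))` and its Fourier transform are both wave packets, with
scale and location exchanged for inverse scale and frequency. Writing `L` for a difference of two
measures and `L̂` for its transform, this turns `L̂(packet)` into `r^{-d} L(dual packet)`.

For a non-negative measure, a packet profile with non-negative transform bounds the mass of every
unit ball by the variation of the transform on one fixed ball, so the measure is translation
bounded. A wide packet of a translation bounded `L` around `x_n` is therefore controlled by
`|L|(B(x_n, R_n))`, up to an error of size `ε R_n^d`, and dually a narrow packet around `a` is
controlled by `|L̂|(B(x_n, R_n)) / R_n^d`. As the narrow packet shrinks onto `a` it extracts the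
mass at `a`, which must vanish. If `|L|` is small on the balls, this is first applied to `L̂`: then
`L̂ = 0`, which in particular is small, and so `L = 0`.
-/

open FourierTransform Module
open scoped NNReal

section WavePacket

variable {V : Type*} [NormedAddCommGroup V] [InnerProductSpace ℝ V]

/-- The wave packet with profile `f`, located at `b` with scale `r⁻¹` and frequency `c`. For
`b = 0` or `c = 0` it is a modulated, respectively translated, dilate of `f`. -/
def wavePacket (f : V → ℂ) (r : ℝ) (b c : V) (y : V) : ℂ := 𝐞 ⟪c, y⟫ * f (r • (y - b))

lemma norm_wavePacket (f : V → ℂ) (r : ℝ) (b c y : V) :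
    ‖wavePacket f r b c y‖ = ‖f (r • (y - b))‖ := by
  rw [wavePacket, norm_mul, Circle.norm_coe, one_mul]

lemma enorm_wavePacket (f : V → ℂ) (r : ℝ) (b c y : V) :
    ‖wavePacket f r b c y‖ₑ = ‖f (r • (y - b))‖ₑ := by
  simp only [← ofReal_norm, norm_wavePacket]

lemma wavePacket_zero_frequency (f : V → ℂ) (r : ℝ) (b : V) :
    wavePacket f r b 0 = fun y => f (r • (y - b)) := by
  funext y
  simp [wavePacket]

lemma support_wavePacket_subset {f : V → ℂ} {ρ r : ℝ} (hf : Function.support f ⊆ ball 0 ρ)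
    (hr : 0 < r) (b c : V) : Function.support (wavePacket f r b c) ⊆ ball b (r⁻¹ * ρ) := by
  intro y hy
  have hfy : r • (y - b) ∈ ball 0 ρ := hf (right_ne_zero_of_mul hy)
  rwa [mem_ball_zero_iff, norm_smul, Real.norm_of_nonneg hr.le, ← lt_inv_mul_iff₀ hr,
    ← dist_eq_norm] at hfy

lemma contDiff_wavePacket {f : V → ℂ} {n : ℕ∞} (hf : ContDiff ℝ n f) (r : ℝ) (b c : V) :
    ContDiff ℝ n (wavePacket f r b c) := by
  refine ContDiff.mul ?_ (hf.comp (by fun_prop))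
  simp only [Real.fourierChar_apply]
  exact Complex.contDiff_exp.comp <|
    (Complex.ofRealCLM.contDiff.comp (contDiff_const.mul (contDiff_const.inner ℝ contDiff_id))).mul
      contDiff_const

lemma hasCompactSupport_wavePacket {f : V → ℂ} (hf : HasCompactSupport f) {r : ℝ} (hr : r ≠ 0)
    (b c : V) : HasCompactSupport (wavePacket f r b c) :=
  (hf.comp_homeomorph ((Homeomorph.subRight b).trans (Homeomorph.smulOfNeZero r hr))).mul_left

lemma fourier_wavePacket [FiniteDimensional ℝ V] [MeasurableSpace V] [BorelSpace V]
    (f : V → ℂ) {r : ℝ} (hr : r ≠ 0) (b c x : V) :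
    𝓕 (wavePacket f r b c) x =
      𝐞 ⟪b, c⟫ * (|r ^ finrank ℝ V|⁻¹ : ℝ) * wavePacket (𝓕 f) r⁻¹ c (-b) x := by
  set phase : ℂ := 𝐞 ⟪b, c⟫ * 𝐞 ⟪-b, x⟫
  have hr' : (r : ℂ) ≠ 0 := by exact_mod_cast hr
  have integrand (y : V) :
      cexp (↑(-2 * Real.pi * ⟪y + b, x⟫) * I) • wavePacket f r b c (y + b) =
        phase * (cexp (↑(-2 * Real.pi * ⟪r • y, r⁻¹ • (x - c)⟫) * I) • f (r • y)) := by
    simp only [phase, wavePacket, Real.fourierChar_apply, smul_eq_mul, add_sub_cancel_right]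
    simp only [← mul_assoc, ← Complex.exp_add]
    congr 2
    simp only [inner_add_left, inner_add_right, inner_smul_left, inner_smul_right, inner_sub_right,
      inner_neg_left, real_inner_comm c, conj_trivial]
    push_cast
    field_simp
    ring
  calc 𝓕 (wavePacket f r b c) x
      = ∫ y, cexp (↑(-2 * Real.pi * ⟪y + b, x⟫) * I) • wavePacket f r b c (y + b) := by
        rw [Real.fourier_eq', integral_add_right_eq_self
          (fun y => cexp (↑(-2 * Real.pi * ⟪y, x⟫) * I) • wavePacket f r b c y)]
    _ = phase * ((|r ^ finrank ℝ V|⁻¹ : ℝ) * 𝓕 f (r⁻¹ • (x - c))) := by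
        simp only [integrand]
        rw [integral_const_mul, Measure.integral_comp_smul volume
          (fun z => cexp (↑(-2 * Real.pi * ⟪z, r⁻¹ • (x - c)⟫) * I) • f z), ← Real.fourier_eq',
          Complex.real_smul, abs_inv]
    _ = 𝐞 ⟪b, c⟫ * (|r ^ finrank ℝ V|⁻¹ : ℝ) * wavePacket (𝓕 f) r⁻¹ c (-b) x := by
        rw [wavePacket]
        ring

end WavePacket

section UnitBump

variable (V : Type*) [NormedAddCommGroup V] [InnerProductSpace ℝ V] [FiniteDimensional ℝ V]

/-- The real bump function underlying `unitBump`. -/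
def unitContDiffBump : ContDiffBump (0 : V) := ⟨1 / 4, 1 / 2, by norm_num, by norm_num⟩

/-- An even smooth bump function on `V` with values in `[0, 1]`, equal to `1` at the origin and
supported in the unit ball, as a Schwartz function. -/
def unitBump : 𝓢(V, ℂ) :=
  ((unitContDiffBump V).hasCompactSupport.comp_left Complex.ofReal_zero).toSchwartzMap
    (Complex.ofRealCLM.contDiff.comp (unitContDiffBump V).contDiff)

lemma coe_unitBump : ⇑(unitBump V) = fun y => (unitContDiffBump V y : ℂ) := rfl

lemma unitBump_zero : unitBump V 0 = 1 := by
  simp [coe_unitBump, (unitContDiffBump V).one_of_mem_closedBall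
    (mem_closedBall_self (unitContDiffBump V).rIn_pos.le)]

lemma norm_unitBump_le_one (y : V) : ‖unitBump V y‖ ≤ 1 := by
  simpa only [coe_unitBump, norm_real, Real.norm_of_nonneg (unitContDiffBump V).nonneg]
    using (unitContDiffBump V).le_one

lemma hasCompactSupport_unitBump : HasCompactSupport (unitBump V) :=
  (unitContDiffBump V).hasCompactSupport.comp_left Complex.ofReal_zero

lemma support_unitBump_subset : Function.support (unitBump V) ⊆ ball 0 1 := by
  intro y hy
  have hy' : y ∈ Function.support (unitContDiffBump V) := by simpa [coe_unitBump] using hy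
  rw [(unitContDiffBump V).support_eq] at hy'
  exact ball_subset_ball (by norm_num [unitContDiffBump]) hy'

variable {V} in
lemma norm_unitBump_smul_le {s : ℝ} (hs : 1 ≤ s) (u : V) :
    ‖unitBump V (s • u)‖ ≤ (ball 0 1).indicator 1 u := by
  by_cases hu : u ∈ ball 0 1
  · rw [Set.indicator_of_mem hu]
    exact norm_unitBump_le_one V _
  · have notMem : s • u ∉ ball 0 1 := by
      rw [mem_ball_zero_iff, not_lt] at hu ⊢
      rw [norm_smul, Real.norm_of_nonneg (by linarith)]
      exact one_le_mul_of_one_le_of_one_le hs hu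
    rw [Set.indicator_of_notMem hu,
      Function.notMem_support.1 (mt (@support_unitBump_subset V _ _ _ _) notMem), norm_zero]

variable [MeasurableSpace V] [BorelSpace V]

lemma fourier_unitBump_zero_ne_zero : 𝓕 (unitBump V) 0 ≠ 0 := by
  have integral_ne_zero : ∫ y, unitContDiffBump V y ≠ 0 := (unitContDiffBump V).integral_pos.ne'
  rw [SchwartzMap.fourier_coe, Real.fourier_eq', coe_unitBump]
  simpa [integral_complex_ofReal] using integral_ne_zero

lemma conj_fourier_unitBump (u : V) :
    starRingEnd ℂ (𝓕 (unitBump V) u) = 𝓕 (unitBump V) u := by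
  rw [SchwartzMap.fourier_coe, Real.fourier_eq', ← integral_conj, ← integral_neg_eq_self]
  congr 1
  ext y
  simp [coe_unitBump, ← Complex.exp_conj, (unitContDiffBump V).neg, Complex.conj_ofNat]

/-- The self-convolution of `unitBump`, whose Fourier transform is non-negative. -/
def unitBumpConv : 𝓢(V, ℂ) :=
  SchwartzMap.convolution (ContinuousLinearMap.mul ℂ ℂ) (unitBump V) (unitBump V)

lemma hasCompactSupport_unitBumpConv : HasCompactSupport (unitBumpConv V) := by
  have coe_eq_convolution : ⇑(unitBumpConv V) = _ := funext <| SchwartzMap.convolution_apply _ _ _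
  rw [coe_eq_convolution]
  exact (hasCompactSupport_unitBump V).convolution _ (hasCompactSupport_unitBump V)

lemma fourier_unitBumpConv (u : V) :
    𝓕 (unitBumpConv V) u = 𝓕 (unitBump V) u * 𝓕 (unitBump V) u := by
  simp [unitBumpConv, SchwartzMap.fourier_convolution]

lemma fourier_unitBumpConv_eq_norm (u : V) :
    𝓕 (unitBumpConv V) u = (‖𝓕 (unitBumpConv V) u‖ : ℂ) := by
  obtain ⟨t, ht⟩ := Complex.conj_eq_iff_real.1 (conj_fourier_unitBump V u)
  rw [fourier_unitBumpConv, ht, ← Complex.ofReal_mul, Complex.norm_real, Real.norm_of_nonneg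
    (mul_self_nonneg t)]

lemma fourier_unitBumpConv_zero_ne_zero : 𝓕 (unitBumpConv V) 0 ≠ 0 := by
  rw [fourier_unitBumpConv]
  exact mul_self_ne_zero.2 (fourier_unitBump_zero_ne_zero V)

end UnitBump

section DecayWeight

variable {V : Type*} [NormedAddCommGroup V] [NormedSpace ℝ V]

/-- The weight `(1 + ‖u‖)^{-(dim V + 1)}`, an integrable majorant for Schwartz functions. -/
def decayWeight (u : V) : ℝ := ((1 + ‖u‖) ^ (finrank ℝ V + 1))⁻¹

lemma decayWeight_nonneg (u : V) : 0 ≤ decayWeight u := by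
  unfold decayWeight
  positivity

lemma decayWeight_smul_le {s : ℝ} (hs : 1 ≤ s) (u : V) : decayWeight (s • u) ≤ decayWeight u := by
  have norm_le : ‖u‖ ≤ ‖s • u‖ := by
    rw [norm_smul, Real.norm_of_nonneg (by linarith)]
    exact le_mul_of_one_le_left (norm_nonneg u) hs
  unfold decayWeight
  gcongr

lemma decayWeight_le_of_dist_le_one {u v : V} (huv : dist u v ≤ 1) :
    decayWeight u ≤ 2 ^ (finrank ℝ V + 1) * decayWeight v := by
  have norm_v_le : 1 + ‖v‖ ≤ 2 * (1 + ‖u‖) := by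
    have := norm_le_norm_add_norm_sub' v u
    rw [← dist_eq_norm, dist_comm] at this
    linarith [norm_nonneg u]
  unfold decayWeight
  rw [← div_eq_mul_inv, inv_eq_one_div, div_le_div_iff₀ (by positivity) (by positivity), one_mul,
    ← mul_pow]
  gcongr

lemma exists_one_add_norm_pow_mul_norm_le (φ : 𝓢(V, ℂ)) (k : ℕ) :
    ∃ C : ℝ≥0, ∀ u, (1 + ‖u‖) ^ k * ‖φ u‖ ≤ C := by
  refine ⟨(2 ^ k * (Finset.Iic (k, 0)).sup (fun m => SchwartzMap.seminorm ℝ m.1 m.2) φ).toNNReal,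
    fun u => ?_⟩
  simpa using (SchwartzMap.one_add_le_sup_seminorm_apply (𝕜 := ℝ) (m := (k, 0)) le_rfl le_rfl φ
    u).trans (Real.le_coe_toNNReal _)

lemma exists_norm_le_decayWeight (φ : 𝓢(V, ℂ)) : ∃ C : ℝ≥0, ∀ u, ‖φ u‖ ≤ C * decayWeight u := by
  obtain ⟨C, hC⟩ := exists_one_add_norm_pow_mul_norm_le φ (finrank ℝ V + 1)
  refine ⟨C, fun u => ?_⟩
  rw [decayWeight, ← div_eq_mul_inv, le_div_iff₀' (by positivity)]
  exact hC u

lemma exists_enorm_le_indicator_add_decayWeight (φ : 𝓢(V, ℂ)) :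
    ∃ C : ℝ≥0, ∀ ε : ℝ, 0 < ε → ∀ u,
      ‖φ u‖ₑ ≤ C * ((ball 0 ε⁻¹).indicator 1 u + ENNReal.ofReal (ε * decayWeight u)) := by
  obtain ⟨C, hC⟩ := exists_one_add_norm_pow_mul_norm_le φ (finrank ℝ V + 2)
  have enorm_le {u : V} {t : ℝ} (ht : ‖φ u‖ ≤ C * t) : ‖φ u‖ₑ ≤ C * ENNReal.ofReal t := by
    rw [← ofReal_norm, ← ENNReal.ofReal_coe_nnreal, ← ENNReal.ofReal_mul C.coe_nonneg]
    exact ENNReal.ofReal_le_ofReal ht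
  refine ⟨C, fun ε hε u => ?_⟩
  by_cases hu : u ∈ ball 0 ε⁻¹
  · have near : ‖φ u‖ ≤ C * 1 := by
      rw [mul_one]
      refine (le_mul_of_one_le_left (norm_nonneg _) (one_le_pow₀ ?_)).trans (hC u)
      linarith [norm_nonneg u]
    rw [Set.indicator_of_mem hu, Pi.one_apply]
    refine (enorm_le near).trans ?_
    rw [ENNReal.ofReal_one]
    gcongr
    exact le_self_add
  · have one_le : 1 ≤ ε * (1 + ‖u‖) := by
      rw [mem_ball_zero_iff, not_lt, inv_le_iff_one_le_mul₀' hε] at hu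
      linarith
    rw [Set.indicator_of_notMem hu, zero_add]
    refine enorm_le ?_
    rw [decayWeight, ← mul_assoc, ← div_eq_mul_inv, le_div_iff₀' (by positivity)]
    calc (1 + ‖u‖) ^ (finrank ℝ V + 1) * ‖φ u‖
        ≤ (ε * (1 + ‖u‖)) * ((1 + ‖u‖) ^ (finrank ℝ V + 1) * ‖φ u‖) :=
          le_mul_of_one_le_left (by positivity) one_le
      _ = ((1 + ‖u‖) ^ (finrank ℝ V + 2) * ‖φ u‖) * ε := by ring
      _ ≤ C * ε := by gcongr; exact hC u

variable [MeasurableSpace V] [BorelSpace V]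

lemma measurable_decayWeight : Measurable (decayWeight : V → ℝ) := by
  unfold decayWeight
  fun_prop

variable [FiniteDimensional ℝ V] (vol : Measure V) [vol.IsAddHaarMeasure]

lemma lintegral_decayWeight_lt_top : ∫⁻ u, ENNReal.ofReal (decayWeight u) ∂vol < ⊤ := by
  have eq_rpow (u : V) : decayWeight u = (1 + ‖u‖) ^ (-((finrank ℝ V + 1 : ℕ) : ℝ)) := by
    rw [decayWeight, Real.rpow_neg (by positivity), Real.rpow_natCast]
  simp only [eq_rpow]
  exact finite_integral_one_add_norm (by push_cast; linarith)

lemma lintegral_comp_homothety {w : V → ℝ≥0∞} (hw : Measurable w) {r : ℝ} (hr : 0 < r) (c : V) :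
    ∫⁻ t, w (r⁻¹ • (t - c)) ∂vol = ENNReal.ofReal (r ^ finrank ℝ V) * ∫⁻ u, w u ∂vol := by
  rw [lintegral_sub_right_eq_self (fun t => w (r⁻¹ • t)) c,
    ← lintegral_map hw (measurable_const_smul r⁻¹),
    Measure.map_addHaar_smul vol (inv_ne_zero hr.ne'), lintegral_smul_measure, inv_pow, inv_inv,
    abs_of_pos (by positivity), smul_eq_mul]

end DecayWeight

namespace PPM

section Pairing

variable {V : Type*} (μ : PPM V)

lemma var_eq_tsum_indicator (A : Set V) :
    μ.var A = ∑' x, A.indicator (fun x => ‖μ.mass x‖ₑ) x := by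
  rw [← tsum_subtype]
  rfl

variable {μ} {g : V → ℂ} {A : Set V}

lemma tsum_enorm_mul_le_mul_var {M : ℝ≥0∞} (hM : ∀ y, ‖g y‖ₑ ≤ M) (hA : Function.support g ⊆ A) :
    ∑' y, ‖μ.mass y * g y‖ₑ ≤ M * μ.var A := by
  rw [var_eq_tsum_indicator, ← ENNReal.tsum_mul_left]
  refine ENNReal.tsum_le_tsum fun y => ?_
  by_cases hy : y ∈ A
  · rw [Set.indicator_of_mem hy, enorm_mul, mul_comm]
    gcongr
    exact hM y
  · simp [Function.notMem_support.1 (mt (@hA y) hy)]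

lemma enorm_pair_le_mul_var {M : ℝ≥0∞} (hM : ∀ y, ‖g y‖ₑ ≤ M) (hA : Function.support g ⊆ A) :
    ‖μ.pair g‖ₑ ≤ M * μ.var A :=
  enorm_tsum_le_tsum_enorm.trans (tsum_enorm_mul_le_mul_var hM hA)

lemma mul_var_le_tsum_enorm_mul {a : ℝ≥0∞} (ha : ∀ y ∈ A, a ≤ ‖g y‖ₑ) :
    a * μ.var A ≤ ∑' y, ‖μ.mass y * g y‖ₑ := by
  rw [var_eq_tsum_indicator, ← ENNReal.tsum_mul_left]
  refine ENNReal.tsum_le_tsum fun y => ?_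
  by_cases hy : y ∈ A
  · rw [Set.indicator_of_mem hy, enorm_mul, mul_comm]
    gcongr
    exact ha y hy
  · simp [hy]

lemma Nonneg.tsum_enorm_mul_eq (hμ : μ.Nonneg) (hg : ∀ y, g y = (‖g y‖ : ℂ))
    (hs : Summable fun y => μ.mass y * g y) : ∑' y, ‖μ.mass y * g y‖ₑ = ‖μ.pair g‖ₑ := by
  have pair_eq : μ.pair g = (∑' y, ‖μ.mass y * g y‖ : ℝ) := by
    rw [pair, Complex.ofReal_tsum]
    refine tsum_congr fun y => ?_
    rw [norm_mul, Complex.ofReal_mul, ← hμ y, ← hg y]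
  rw [pair_eq, ← ofReal_norm, Complex.norm_real,
    Real.norm_of_nonneg (tsum_nonneg fun _ => norm_nonneg _),
    ENNReal.ofReal_tsum_of_nonneg (fun _ => norm_nonneg _) hs.norm]
  simp only [ofReal_norm]

variable (μ) in
lemma lintegral_tsum_enorm_mul {α : Type*} [MeasurableSpace α] (m : Measure α)
    {F : V → α → ℝ≥0∞} (hF : ∀ z, Measurable (F z)) :
    ∫⁻ t, ∑' z, ‖μ.mass z‖ₑ * F z t ∂m = ∑' z, ‖μ.mass z‖ₑ * ∫⁻ t, F z t ∂m := by
  have restrict (G : V → ℝ≥0∞) : ∑' z, ‖μ.mass z‖ₑ * G z =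
      ∑' z : Function.support μ.mass, ‖μ.mass z‖ₑ * G z :=
    (tsum_subtype_eq_of_support_subset fun z hz => by
      simpa using left_ne_zero_of_mul hz).symm
  have : Countable (Function.support μ.mass) := μ.countable.to_subtype
  simp only [restrict]
  rw [lintegral_tsum fun z : Function.support μ.mass => ((hF z).const_mul _).aemeasurable]
  simp only [lintegral_const_mul _ (hF _)]

/-- The difference of two pure point measures. -/
def diff (μ ν : PPM V) : PPM V where
  mass x := μ.mass x - ν.mass x
  countable := (μ.countable.union ν.countable).mono (Function.support_sub _ _)

lemma diff_var_le (μ ν : PPM V) (A : Set V) : (μ.diff ν).var A ≤ μ.var A + ν.var A := by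
  unfold var
  rw [← ENNReal.tsum_add]
  exact ENNReal.tsum_le_tsum fun z => enorm_sub_le

lemma pair_diff {μ ν : PPM V} {g : V → ℂ} (hμ : Summable fun y => μ.mass y * g y)
    (hν : Summable fun y => ν.mass y * g y) : (μ.diff ν).pair g = μ.pair g - ν.pair g := by
  simp only [pair, diff, sub_mul]
  exact hμ.tsum_sub hν

end Pairing

section TranslationBounded

variable {V : Type*} [NormedAddCommGroup V]

/-- A pure point measure is translation bounded if the total variations of all unit balls are
uniformly bounded. -/
def TranslationBounded (μ : PPM V) : Prop := ∃ C : ℝ≥0, ∀ c, μ.var (ball c 1) ≤ C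

lemma TranslationBounded.diff {μ ν : PPM V} (hμ : μ.TranslationBounded)
    (hν : ν.TranslationBounded) : (μ.diff ν).TranslationBounded := by
  obtain ⟨C, hC⟩ := hμ
  obtain ⟨D, hD⟩ := hν
  refine ⟨C + D, fun c => (diff_var_le μ ν _).trans ?_⟩
  push_cast
  exact add_le_add (hC c) (hD c)

lemma measure_ball_mul_tsum_le [MeasurableSpace V] [BorelSpace V] (vol : Measure V)
    [vol.IsAddHaarMeasure] {μ : PPM V} {C : ℝ≥0∞} (hC : ∀ c, μ.var (ball c 1) ≤ C)
    {w w' : V → ℝ≥0∞} (hw' : Measurable w') (hww' : ∀ z t, dist t z < 1 → w z ≤ w' t) :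
    vol (ball 0 1) * ∑' z, ‖μ.mass z‖ₑ * w z ≤ C * ∫⁻ t, w' t ∂vol := by
  have ball_average (z : V) : vol (ball 0 1) * w z ≤ ∫⁻ t, (ball z 1).indicator w' t ∂vol := by
    rw [lintegral_indicator measurableSet_ball, ← Measure.addHaar_ball_center vol z, mul_comm,
      ← setLIntegral_const]
    exact setLIntegral_mono hw' fun t ht => hww' z t ht
  calc vol (ball 0 1) * ∑' z, ‖μ.mass z‖ₑ * w z
      = ∑' z, ‖μ.mass z‖ₑ * (vol (ball 0 1) * w z) := by
        simp only [← ENNReal.tsum_mul_left, mul_left_comm]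
    _ ≤ ∑' z, ‖μ.mass z‖ₑ * ∫⁻ t, (ball z 1).indicator w' t ∂vol := by
        gcongr with z
        exact ball_average z
    _ = ∫⁻ t, ∑' z, ‖μ.mass z‖ₑ * (ball z 1).indicator w' t ∂vol :=
        (μ.lintegral_tsum_enorm_mul vol fun z => hw'.indicator measurableSet_ball).symm
    _ = ∫⁻ t, μ.var (ball t 1) * w' t ∂vol := by
        congr with t
        rw [var_eq_tsum_indicator, ← ENNReal.tsum_mul_right]
        congr with z
        by_cases hz : dist z t < 1 <;> simp [Set.indicator, mem_ball, dist_comm t z, hz]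
    _ ≤ ∫⁻ t, C * w' t ∂vol := by
        gcongr with t
        exact hC t
    _ = C * ∫⁻ t, w' t ∂vol := lintegral_const_mul _ hw'

variable [NormedSpace ℝ V] [FiniteDimensional ℝ V] {μ : PPM V}

lemma TranslationBounded.exists_tsum_decayWeight_le (hμ : μ.TranslationBounded) :
    ∃ K : ℝ≥0, ∀ r : ℝ, 1 ≤ r → ∀ c,
      ∑' z, ‖μ.mass z‖ₑ * ENNReal.ofReal (decayWeight (r⁻¹ • (z - c))) ≤
        K * ENNReal.ofReal (r ^ finrank ℝ V) := by
  borelize V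
  let vol : Measure V := Measure.addHaar
  obtain ⟨C, hC⟩ := hμ
  set I := ∫⁻ u, ENNReal.ofReal (decayWeight u) ∂vol
  have vol_ne_zero : vol (ball 0 1) ≠ 0 := (measure_ball_pos vol 0 one_pos).ne'
  have K_ne_top : (vol (ball 0 1))⁻¹ * (C * (2 ^ (finrank ℝ V + 1) * I)) ≠ ⊤ :=
    ENNReal.mul_ne_top (ENNReal.inv_ne_top.2 vol_ne_zero) <|
      ENNReal.mul_ne_top ENNReal.coe_ne_top <|
        ENNReal.mul_ne_top (by finiteness) (lintegral_decayWeight_lt_top vol).ne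
  refine ⟨((vol (ball 0 1))⁻¹ * (C * (2 ^ (finrank ℝ V + 1) * I))).toNNReal, fun r hr c => ?_⟩
  have weight_doubling (z t : V) (hzt : dist t z < 1) :
      ENNReal.ofReal (decayWeight (r⁻¹ • (z - c))) ≤
        2 ^ (finrank ℝ V + 1) * ENNReal.ofReal (decayWeight (r⁻¹ • (t - c))) := by
    rw [← ENNReal.ofReal_ofNat 2, ← ENNReal.ofReal_pow zero_le_two,
      ← ENNReal.ofReal_mul (by positivity)]
    refine ENNReal.ofReal_le_ofReal (decayWeight_le_of_dist_le_one ?_)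
    rw [dist_smul₀, dist_sub_right, dist_comm, Real.norm_of_nonneg (by positivity)]
    exact mul_le_one₀ (inv_le_one_of_one_le₀ hr) dist_nonneg hzt.le
  have measurable_weight : Measurable fun u : V => ENNReal.ofReal (decayWeight u) :=
    measurable_decayWeight.ennreal_ofReal
  have average := measure_ball_mul_tsum_le vol hC
    ((measurable_weight.comp (by fun_prop : Measurable fun t => r⁻¹ • (t - c))).const_mul _)
    weight_doubling
  rw [ENNReal.coe_toNNReal K_ne_top, mul_assoc,
    ← ENNReal.mul_le_iff_le_inv vol_ne_zero measure_ball_lt_top.ne]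
  refine average.trans_eq ?_
  rw [lintegral_const_mul _ (measurable_weight.comp (by fun_prop))]
  simp only [Function.comp_apply]
  rw [lintegral_comp_homothety vol measurable_weight (by positivity)]
  ring

lemma TranslationBounded.summable_norm_mul_decayWeight (hμ : μ.TranslationBounded) (a : V) :
    Summable fun z => ‖μ.mass z‖ * decayWeight (z - a) := by
  obtain ⟨K, hK⟩ := hμ.exists_tsum_decayWeight_le
  have sum_ne_top := ne_top_of_le_ne_top (by finiteness) (hK 1 le_rfl a)
  refine (ENNReal.summable_toReal sum_ne_top).congr fun z => ?_
  simp [ENNReal.toReal_ofReal (decayWeight_nonneg _)]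

lemma TranslationBounded.summable_mul (hμ : μ.TranslationBounded) (φ : 𝓢(V, ℂ)) :
    Summable fun z => μ.mass z * φ z := by
  obtain ⟨C, hC⟩ := exists_norm_le_decayWeight φ
  refine ((hμ.summable_norm_mul_decayWeight 0).mul_left (C : ℝ)).of_norm_bounded fun z => ?_
  rw [norm_mul, mul_left_comm, sub_zero]
  gcongr
  exact hC z

end TranslationBounded

section WavePacket

variable {V : Type*} [NormedAddCommGroup V] [InnerProductSpace ℝ V] {μ : PPM V}

lemma TranslationBounded.exists_enorm_pair_wavePacket_le [FiniteDimensional ℝ V]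
    (hμ : μ.TranslationBounded) (φ : 𝓢(V, ℂ)) :
    ∃ K : ℝ≥0, ∀ ε : ℝ, 0 < ε → ∀ r : ℝ, 1 ≤ r → ∀ b c,
      ‖μ.pair (wavePacket φ r⁻¹ b c)‖ₑ ≤
        K * (μ.var (ball b (r / ε)) + ENNReal.ofReal (ε * r ^ finrank ℝ V)) := by
  obtain ⟨K, hK⟩ := hμ.exists_tsum_decayWeight_le
  obtain ⟨C, hC⟩ := exists_enorm_le_indicator_add_decayWeight φ
  refine ⟨C * (1 + K), fun ε hε r hr b c => ?_⟩
  set near := (ball b (r / ε)).indicator fun z => ‖μ.mass z‖ₑ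
  set far := fun z => ‖μ.mass z‖ₑ * ENNReal.ofReal (decayWeight (r⁻¹ • (z - b)))
  have mem_near_iff (z : V) : r⁻¹ • (z - b) ∈ ball 0 ε⁻¹ ↔ z ∈ ball b (r / ε) := by
    rw [mem_ball_zero_iff, norm_smul, Real.norm_of_nonneg (by positivity), mem_ball, dist_eq_norm,
      inv_mul_lt_iff₀ (by positivity), div_eq_mul_inv]
  have term_le (z : V) : ‖μ.mass z * wavePacket φ r⁻¹ b c z‖ₑ ≤
      C * (near z + ENNReal.ofReal ε * far z) := by
    rw [enorm_mul, enorm_wavePacket]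
    refine (mul_le_mul_right (hC ε hε (r⁻¹ • (z - b))) _).trans_eq ?_
    rw [ENNReal.ofReal_mul hε.le]
    by_cases hz : z ∈ ball b (r / ε)
    · simp only [near, far, Set.indicator_of_mem hz, Set.indicator_of_mem ((mem_near_iff z).2 hz),
        Pi.one_apply]
      ring
    · simp only [near, far, Set.indicator_of_notMem hz,
        Set.indicator_of_notMem (mt (mem_near_iff z).1 hz)]
      ring
  calc ‖μ.pair (wavePacket φ r⁻¹ b c)‖ₑ
      ≤ ∑' z, C * (near z + ENNReal.ofReal ε * far z) :=
        enorm_tsum_le_tsum_enorm.trans (ENNReal.tsum_le_tsum term_le)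
    _ = C * (μ.var (ball b (r / ε)) + ENNReal.ofReal ε * ∑' z, far z) := by
        rw [ENNReal.tsum_mul_left, ENNReal.tsum_add, ENNReal.tsum_mul_left,
          ← var_eq_tsum_indicator]
    _ ≤ C * ((1 + K) * μ.var (ball b (r / ε)) +
          ENNReal.ofReal ε * ((1 + K) * ENNReal.ofReal (r ^ finrank ℝ V))) := by
        gcongr
        · exact le_mul_of_one_le_left' le_self_add
        · exact (hK r hr b).trans (mul_le_mul_left le_add_self _)
    _ = (C * (1 + K) : ℝ≥0) * (μ.var (ball b (r / ε)) +
          ENNReal.ofReal (ε * r ^ finrank ℝ V)) := by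
        rw [ENNReal.ofReal_mul hε.le]
        push_cast
        ring

-- Only norms converge: the phase `𝐞 ⟪ξ i, a⟫` does not in general.
lemma tendsto_norm_pair_wavePacket {f : V → ℂ} (hf : Tendsto f (cobounded V) (𝓝 0)) {w : V → ℝ}
    (hw : ∀ s : ℝ, 1 ≤ s → ∀ u, ‖f (s • u)‖ ≤ w u) {a : V}
    (hμ : Summable fun z => ‖μ.mass z‖ * w (z - a)) {ι : Type*} {l : Filter ι} {s : ι → ℝ}
    (hs : Tendsto s l atTop) (ξ : ι → V) :
    Tendsto (fun i => ‖μ.pair (wavePacket f (s i) a (ξ i))‖) l (𝓝 ‖μ.mass a * f 0‖) := by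
  classical
  set centered : ι → V → ℂ := fun i z => 𝐞 ⟪ξ i, z - a⟫ * f (s i • (z - a))
  have norm_centered (i : ι) (z : V) : ‖centered i z‖ = ‖f (s i • (z - a))‖ := by
    rw [norm_mul, Circle.norm_coe, one_mul]
  have norm_pair (i : ι) :
      ‖μ.pair (wavePacket f (s i) a (ξ i))‖ = ‖∑' z, μ.mass z * centered i z‖ := by
    have factor (z : V) : μ.mass z * wavePacket f (s i) a (ξ i) z =
        𝐞 ⟪ξ i, a⟫ * (μ.mass z * centered i z) := by
      rw [wavePacket, ← sub_add_cancel ⟪ξ i, z⟫ ⟪ξ i, a⟫, ← inner_sub_right,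
        AddChar.map_add_eq_mul, Circle.coe_mul]
      ring
    rw [pair, tsum_congr factor, tsum_mul_left, norm_mul, Circle.norm_coe, one_mul]
  simp only [norm_pair]
  refine Tendsto.norm ?_
  rw [← tsum_ite_eq a fun z => μ.mass z * f 0]
  refine tendsto_tsum_of_dominated_convergence hμ (fun z => ?_) ?_
  · by_cases hz : z = a
    · simpa [hz, centered] using tendsto_const_nhds
    · rw [if_neg hz, ← mul_zero (μ.mass z)]
      have escape : Tendsto (fun i => s i • (z - a)) l (cobounded V) := by
        rw [← tendsto_norm_atTop_iff_cobounded]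
        simp only [norm_smul]
        exact (tendsto_norm_atTop_atTop.comp hs).atTop_mul_const
          (norm_pos_iff.2 (sub_ne_zero.2 hz))
      refine Tendsto.const_mul _ (tendsto_zero_iff_norm_tendsto_zero.2 ?_)
      simp only [norm_centered]
      exact tendsto_zero_iff_norm_tendsto_zero.1 (hf.comp escape)
  · filter_upwards [hs.eventually_ge_atTop 1] with i hi z
    rw [norm_mul, norm_centered]
    gcongr
    exact hw _ hi _

end WavePacket

end PPM

section FourierPair

lemma PPM.locFinite.summable_mul {L : PPM (Ed d)} (hL : L.locFinite) {g : Ed d → ℂ} {M : ℝ}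
    (hM : ∀ y, ‖g y‖ ≤ M) (hg : IsBounded (Function.support g)) :
    Summable fun y => L.mass y * g y := by
  obtain ⟨ρ, hρ⟩ := hg.subset_ball 0
  have enorm_le (y : Ed d) : ‖g y‖ₑ ≤ ENNReal.ofReal M :=
    (ofReal_norm (g y)).symm.trans_le (ENNReal.ofReal_le_ofReal (hM y))
  have sum_ne_top : ∑' y, ‖L.mass y * g y‖ₑ ≠ ⊤ := ne_top_of_le_ne_top
    (ENNReal.mul_ne_top ENNReal.ofReal_ne_top (hL ρ).ne)
    (PPM.tsum_enorm_mul_le_mul_var enorm_le hρ)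
  exact (tsum_enorm_ne_top_iff_summable_norm.1 sum_ne_top).of_norm

variable {L Lh : PPM (Ed d)}

lemma IsFT.diff {μ ν μh νh : PPM (Ed d)} (hμ : IsFT μ μh) (hν : IsFT ν νh) (hμt : μ.temperate)
    (hνt : ν.temperate) (hμh : μh.locFinite) (hνh : νh.locFinite) :
    IsFT (μ.diff ν) (μh.diff νh) := by
  intro φ hφ
  obtain ⟨M, hM⟩ := φ.continuous.bounded_above_of_compact_support hφ
  have hsupp : IsBounded (Function.support φ) := hφ.isCompact.isBounded.subset (subset_tsupport φ)
  rw [PPM.pair_diff (hμt _) (hνt _), hμ φ hφ, hν φ hφ,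
    PPM.pair_diff (hμh.summable_mul hM hsupp) (hνh.summable_mul hM hsupp)]

lemma IsFT.enorm_pair_wavePacket (h : IsFT L Lh) {f : 𝓢(Ed d, ℂ)} (hf : HasCompactSupport f)
    {r : ℝ} (hr : 0 < r) (b c : Ed d) :
    ‖Lh.pair (wavePacket f r b c)‖ₑ * ENNReal.ofReal (r ^ d) =
      ‖L.pair (wavePacket (𝓕 f : 𝓢(Ed d, ℂ)) r⁻¹ c (-b))‖ₑ := by
  have smooth := contDiff_wavePacket (f.smooth ⊤) r b c
  have compact := hasCompactSupport_wavePacket hf hr.ne' b c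
  have transform := h (compact.toSchwartzMap smooth) compact
  have pair_fourier : L.pair (𝓕 (wavePacket f r b c)) =
      𝐞 ⟪b, c⟫ * ((r ^ d)⁻¹ : ℝ) * L.pair (wavePacket (𝓕 f : 𝓢(Ed d, ℂ)) r⁻¹ c (-b)) := by
    simp only [PPM.pair, ← tsum_mul_left]
    refine tsum_congr fun x => ?_
    rw [fourier_wavePacket _ hr.ne', finrank_euclideanSpace_fin, abs_of_pos (by positivity),
      SchwartzMap.fourier_coe]
    ring
  rw [fourierCLE_apply, SchwartzMap.fourier_coe] at transform
  have pair_eq : L.pair (𝓕 (wavePacket f r b c)) = Lh.pair (wavePacket f r b c) := transform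
  rw [← pair_eq, pair_fourier, ← ofReal_norm, ← ofReal_norm, norm_mul, norm_mul, Circle.norm_coe,
    one_mul, Complex.norm_real, Real.norm_of_nonneg (by positivity),
    ← ENNReal.ofReal_mul (by positivity), inv_mul_eq_div, div_mul_cancel₀ _ (by positivity)]

lemma PPM.temperate.summable_mul_comp_homothety (hL : L.temperate) (φ : 𝓢(Ed d, ℂ)) {s : ℝ}
    (hs : s ≠ 0) (c : Ed d) : Summable fun x => L.mass x * φ (s • (x - c)) :=
  hL (SchwartzMap.compSubConstCLM ℂ c (SchwartzMap.compCLMOfContinuousLinearEquiv ℂ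
    (ContinuousLinearEquiv.smulLeft (Units.mk0 s hs)) φ))

lemma PPM.Nonneg.translationBounded (hL : L.Nonneg) (hLt : L.temperate) (hLh : Lh.locFinite)
    (h : IsFT L Lh) : L.TranslationBounded := by
  set f := unitBumpConv (Ed d)
  have hf : HasCompactSupport f := hasCompactSupport_unitBumpConv (Ed d)
  obtain ⟨a, ha, ha'⟩ := exists_between
    (enorm_pos.2 (fourier_unitBumpConv_zero_ne_zero (Ed d)))
  obtain ⟨δ, hδ, lower⟩ := Metric.eventually_nhds_iff.1
    (((𝓕 f).continuous.enorm.tendsto 0).eventually_const_lt ha')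
  obtain ⟨M, hM⟩ := f.continuous.bounded_above_of_compact_support hf
  obtain ⟨ρ, hρ⟩ := hf.isCompact.isBounded.subset_ball 0
  set B := ENNReal.ofReal M * Lh.var (ball 0 (δ⁻¹⁻¹ * ρ)) * ENNReal.ofReal (δ⁻¹ ^ d)
  have B_ne_top : a⁻¹ * B ≠ ⊤ := ENNReal.mul_ne_top (ENNReal.inv_ne_top.2 ha.ne') <|
    ENNReal.mul_ne_top (ENNReal.mul_ne_top ENNReal.ofReal_ne_top (hLh _).ne)
      ENNReal.ofReal_ne_top
  refine ⟨(a⁻¹ * B).toNNReal, fun c => ?_⟩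
  rw [ENNReal.coe_toNNReal B_ne_top, ← ENNReal.mul_le_iff_le_inv ha.ne' ha'.ne_top]
  have upper : ‖Lh.pair (wavePacket f δ⁻¹ 0 c)‖ₑ ≤
      ENNReal.ofReal M * Lh.var (ball 0 (δ⁻¹⁻¹ * ρ)) := by
    refine PPM.enorm_pair_le_mul_var (fun y => ?_) (support_wavePacket_subset
      ((subset_tsupport _).trans hρ) (inv_pos.2 hδ) 0 c)
    rw [enorm_wavePacket, ← ofReal_norm]
    exact ENNReal.ofReal_le_ofReal (hM _)
  calc a * L.var (ball c 1)
      ≤ ∑' z, ‖L.mass z * 𝓕 f (δ • (z - c))‖ₑ := by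
        refine PPM.mul_var_le_tsum_enorm_mul fun z hz => (lower ?_).le
        rw [dist_zero_right, norm_smul, Real.norm_of_nonneg hδ.le, ← dist_eq_norm]
        exact mul_lt_of_lt_one_right hδ hz
    _ = ‖L.pair (wavePacket (𝓕 f : 𝓢(Ed d, ℂ)) δ⁻¹⁻¹ c (-0))‖ₑ := by
        rw [neg_zero, wavePacket_zero_frequency, inv_inv]
        exact hL.tsum_enorm_mul_eq (fun z => fourier_unitBumpConv_eq_norm (Ed d) _)
          (hLt.summable_mul_comp_homothety _ hδ.ne' c)
    _ = ‖Lh.pair (wavePacket f δ⁻¹ 0 c)‖ₑ * ENNReal.ofReal (δ⁻¹ ^ d) :=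
        (h.enorm_pair_wavePacket hf (inv_pos.2 hδ) 0 c).symm
    _ ≤ B := mul_le_mul_left upper _

end FourierPair

section Uniqueness

variable {L Lh : PPM (Ed d)} {ι : Type*} {l : Filter ι} {x : ι → Ed d} {R : ι → ℝ}

lemma IsFT.enorm_pair_wavePacket_unitBump_le (h : IsFT L Lh) {r : ℝ} (hr : 0 < r) (a b : Ed d) :
    ‖L.pair (wavePacket (𝓕 (unitBump (Ed d)) : 𝓢(Ed d, ℂ)) r a (-b))‖ₑ ≤
      Lh.var (ball b r) / ENNReal.ofReal (r ^ d) := by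
  have transform := h.enorm_pair_wavePacket (hasCompactSupport_unitBump (Ed d)) (inv_pos.2 hr) b a
  rw [inv_inv] at transform
  rw [← transform, inv_pow, ENNReal.ofReal_inv_of_pos (by positivity), div_eq_mul_inv]
  gcongr
  refine (PPM.enorm_pair_le_mul_var (M := 1) (fun y => ?_) ?_).trans_eq (one_mul _)
  · rw [enorm_wavePacket, ← ofReal_norm, ENNReal.ofReal_le_one]
    exact norm_unitBump_le_one _ _
  · simpa using support_wavePacket_subset (support_unitBump_subset (Ed d)) (inv_pos.2 hr) b a

lemma IsFT.exists_enorm_transform_pair_wavePacket_unitBump_le (h : IsFT L Lh)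
    (hL : L.TranslationBounded) :
    ∃ K : ℝ≥0, ∀ ε : ℝ, 0 < ε → ∀ r : ℝ, 1 ≤ ε * r → ∀ a b,
      ‖Lh.pair (wavePacket (unitBump (Ed d)) (ε * r) a b)‖ₑ ≤
        K * (L.var (ball b r) / ENNReal.ofReal (r ^ d) / ENNReal.ofReal (ε ^ d) +
          ENNReal.ofReal ε) := by
  obtain ⟨K, hK⟩ := hL.exists_enorm_pair_wavePacket_le (𝓕 (unitBump (Ed d)))
  refine ⟨K, fun ε hε r hr a b => ?_⟩
  have hr0 : 0 < r := pos_of_mul_pos_right (by linarith) hε.le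
  have scaled : 0 < (ε * r) ^ d := by positivity
  have transform := h.enorm_pair_wavePacket (hasCompactSupport_unitBump (Ed d))
    (mul_pos hε hr0) a b
  rw [← ENNReal.mul_le_mul_iff_left (ENNReal.ofReal_pos.2 scaled).ne' ENNReal.ofReal_ne_top,
    transform]
  refine (hK ε hε (ε * r) hr b (-a)).trans_eq ?_
  rw [mul_div_cancel_left₀ r hε.ne', finrank_euclideanSpace_fin, mul_assoc, add_mul,
    ENNReal.ofReal_mul hε.le]
  congr 2
  rw [mul_pow, ENNReal.ofReal_mul (by positivity), ← mul_assoc,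
    ENNReal.div_mul_cancel (ENNReal.ofReal_pos.2 (pow_pos hε d)).ne' ENNReal.ofReal_ne_top,
    ENNReal.div_mul_cancel (ENNReal.ofReal_pos.2 (pow_pos hr0 d)).ne' ENNReal.ofReal_ne_top]

lemma PPM.locFinite.tendsto_enorm_pair_wavePacket_unitBump (hL : L.locFinite)
    {s : ι → ℝ} (hs : Tendsto s l atTop) (a : Ed d) (ξ : ι → Ed d) :
    Tendsto (fun i => ‖L.pair (wavePacket (unitBump (Ed d)) (s i) a (ξ i))‖ₑ) l
      (𝓝 ‖L.mass a‖ₑ) := by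
  have support_subset : (Function.support fun z => (ball (0 : Ed d) 1).indicator (1 : Ed d → ℂ)
      (z - a)) ⊆ ball a 1 := fun z hz => by
    simpa [dist_eq_norm] using Set.mem_of_indicator_ne_zero hz
  have summable := hL.summable_mul (M := 1) (fun z => by
    by_cases hz : z - a ∈ ball (0 : Ed d) 1 <;> simp [hz]) (isBounded_ball.subset support_subset)
  have mass_limit := PPM.tendsto_norm_pair_wavePacket (μ := L) (a := a)
    (cobounded_eq_cocompact (α := Ed d) ▸ zero_at_infty (unitBump (Ed d)))
    (fun s hs u => norm_unitBump_smul_le hs u)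
    (summable.norm.congr fun z => by
      rw [norm_mul]
      by_cases hz : z - a ∈ ball (0 : Ed d) 1 <;> simp [hz]) hs ξ
  rw [unitBump_zero, mul_one] at mass_limit
  simpa only [ofReal_norm] using ENNReal.tendsto_ofReal mass_limit

variable [l.NeBot]

lemma IsFT.mass_eq_zero_of_tendsto_var_transform (h : IsFT L Lh) (hL : L.TranslationBounded)
    (hR : Tendsto R l atTop)
    (hLh : Tendsto (fun i => Lh.var (ball (x i) (R i)) / ENNReal.ofReal (R i ^ d)) l (𝓝 0)) :
    L.mass = 0 := by
  funext a
  set φ : 𝓢(Ed d, ℂ) := 𝓕 (unitBump (Ed d))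
  obtain ⟨C, hC⟩ := exists_norm_le_decayWeight φ
  have mass_limit := PPM.tendsto_norm_pair_wavePacket (μ := L) (a := a)
    (cobounded_eq_cocompact (α := Ed d) ▸ zero_at_infty φ)
    (fun s hs u => (hC _).trans (mul_le_mul_of_nonneg_left (decayWeight_smul_le hs u) C.coe_nonneg))
    (((hL.summable_norm_mul_decayWeight a).mul_left (C : ℝ)).congr fun z => mul_left_comm ..)
    hR (fun i => -x i)
  have zero_limit : Tendsto (fun i => L.pair (wavePacket φ (R i) a (-x i))) l (𝓝 0) := by
    rw [tendsto_zero_iff_enorm_tendsto_zero]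
    refine tendsto_of_tendsto_of_tendsto_of_le_of_le' tendsto_const_nhds hLh
      (Eventually.of_forall fun i => zero_le) ?_
    filter_upwards [hR.eventually_gt_atTop 0] with i hi
    exact h.enorm_pair_wavePacket_unitBump_le hi a (x i)
  have product_eq_zero : L.mass a * φ 0 = 0 := norm_eq_zero.1 <|
    tendsto_nhds_unique mass_limit (tendsto_zero_iff_norm_tendsto_zero.1 zero_limit)
  exact (mul_eq_zero.1 product_eq_zero).resolve_right (fourier_unitBump_zero_ne_zero (Ed d))

lemma IsFT.transform_mass_eq_zero_of_tendsto_var (h : IsFT L Lh) (hL : L.TranslationBounded)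
    (hLh : Lh.locFinite) (hR : Tendsto R l atTop)
    (hvar : Tendsto (fun i => L.var (ball (x i) (R i)) / ENNReal.ofReal (R i ^ d)) l (𝓝 0)) :
    Lh.mass = 0 := by
  funext a
  obtain ⟨K, hK⟩ := h.exists_enorm_transform_pair_wavePacket_unitBump_le hL
  have enorm_mass_le (ε : ℝ) (hε : 0 < ε) : ‖Lh.mass a‖ₑ ≤ K * ENNReal.ofReal ε := by
    have hεR : Tendsto (fun i => ε * R i) l atTop := hR.const_mul_atTop hε
    have bound_limit := ENNReal.Tendsto.const_mul (a := (K : ℝ≥0∞))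
      ((ENNReal.Tendsto.div_const hvar
        (Or.inr (ENNReal.ofReal_pos.2 (pow_pos hε d)).ne')).add_const (ENNReal.ofReal ε))
      (Or.inr ENNReal.coe_ne_top)
    rw [ENNReal.zero_div, zero_add] at bound_limit
    refine le_of_tendsto_of_tendsto (hLh.tendsto_enorm_pair_wavePacket_unitBump hεR a x)
      bound_limit ?_
    filter_upwards [hεR.eventually_ge_atTop 1] with i hi
    exact hK ε hε (R i) hi a (x i)
  have bound_tendsto_zero : Tendsto (fun ε : ℝ => K * ENNReal.ofReal ε) (𝓝[>] 0) (𝓝 0) := by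
    have continuous : Continuous fun ε : ℝ => K * ENNReal.ofReal ε :=
      (ENNReal.continuous_const_mul ENNReal.coe_ne_top).comp ENNReal.continuous_ofReal
    simpa using (continuous.tendsto 0).mono_left nhdsWithin_le_nhds
  exact enorm_eq_zero.1 <| nonpos_iff_eq_zero.1 <| ge_of_tendsto bound_tendsto_zero <|
    eventually_mem_nhdsWithin.mono fun ε hε => enorm_mass_le ε hε

theorem IsFT.mass_eq_zero_of_tendsto_var (h : IsFT L Lh) (hL : L.TranslationBounded)
    (hLh : Lh.locFinite) (hR : Tendsto R l atTop)
    (hvar : Tendsto (fun i => L.var (ball (x i) (R i)) / ENNReal.ofReal (R i ^ d)) l (𝓝 0)) :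
    L.mass = 0 := by
  refine h.mass_eq_zero_of_tendsto_var_transform hL hR (x := x) ?_
  simp [PPM.var, h.transform_mass_eq_zero_of_tendsto_var hL hLh hR hvar]

theorem statement2_general {μ ν μh νh : PPM (Ed d)} (hμ : μ.TranslationBounded)
    (hν : ν.TranslationBounded) (hμh : μh.locFinite) (hνh : νh.locFinite) (hFμ : IsFT μ μh)
    (hFν : IsFT ν νh) (hR : Tendsto R l atTop)
    (h : Tendsto (fun i => dvar μ ν (ball (x i) (R i)) / ENNReal.ofReal (R i ^ d)) l (𝓝 0) ∨
      Tendsto (fun i => dvar μh νh (ball (x i) (R i)) / ENNReal.ofReal (R i ^ d)) l (𝓝 0)) :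
    μ.mass = ν.mass := by
  have hdiff : (μ.diff ν).TranslationBounded := hμ.diff hν
  have hFdiff : IsFT (μ.diff ν) (μh.diff νh) :=
    hFμ.diff hFν hμ.summable_mul hν.summable_mul hμh hνh
  have hdiffh : (μh.diff νh).locFinite := fun r =>
    (PPM.diff_var_le _ _ _).trans_lt (ENNReal.add_lt_top.2 ⟨hμh r, hνh r⟩)
  suffices (μ.diff ν).mass = 0 from sub_eq_zero.1 this
  exact h.elim (hFdiff.mass_eq_zero_of_tendsto_var hdiff hdiffh hR)
    (hFdiff.mass_eq_zero_of_tendsto_var_transform hdiff hR)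

end Uniqueness

/-- Uniqueness theorem: if `μ, ν` are non-negative Poisson measures on `ℝ^d`
with Fourier transforms `μh, νh`, and on some sequence of balls `B(x_n, R_n)` with
`R_n → ∞` either `|μ-ν|(B(x_n,R_n)) = o(R_n^d)` or `|μ̂-ν̂|(B(x_n,R_n)) = o(R_n^d)`,
then `μ = ν`. -/
theorem statement2 {d : ℕ} (μ ν μh νh : PPM (Ed d))
    (hμpos : μ.Nonneg) (hνpos : ν.Nonneg)
    (hμlf : μ.locFinite) (hνlf : ν.locFinite)
    (hμt : μ.temperate) (hνt : ν.temperate)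
    (hμhlf : μh.locFinite) (hνhlf : νh.locFinite)
    (hFμ : IsFT μ μh) (hFν : IsFT ν νh)
    (x : ℕ → Ed d) (R : ℕ → ℝ) (hR : Tendsto R atTop atTop)
    (h : Tendsto (fun n => dvar μ ν (ball (x n) (R n)) / ENNReal.ofReal (R n ^ d))
          atTop (𝓝 0) ∨
         Tendsto (fun n => dvar μh νh (ball (x n) (R n)) / ENNReal.ofReal (R n ^ d))
          atTop (𝓝 0)) :
    μ.mass = ν.mass := by
  exact statement2_general (hμpos.translationBounded hμt hμhlf hFμ)
    (hνpos.translationBounded hνt hνhlf hFν) hμhlf hνhlf hFμ hFν hR h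

end
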